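/- arXiv:2601.10941 — 8 statements merged into one kernel-verified Lean document; each statement's English description precedes it below -/
import Mathlib

section
/- Let E be a real normed space and let I : E → ℝ be continuous and satisfy: (I2) I(0) = 0 and I(u) > 0 for all u ∈ E∖{0}; (I3) for every u ∈ E∖{0} the function t ↦ I(tu)/t² is nondecreasing on (0,∞) with limit 0 as t → 0⁺ and limit +∞ as t → +∞. Then for every ε > 0 and every compact set C ⊂ E∖{0} there exists κ > 0 such that I(tu) ≥ κ t² for all u ∈ C and all t ≥ ε. -/
open Filter Topology Set

/-- If `I : E → ℝ` is continuous on a real normed space, `I(0) = 0`,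
`I(u) > 0` for `u ≠ 0`, and for every `u ≠ 0` the map `t ↦ I(tu)/t²` is nondecreasing on
`(0,∞)` with limits `0` at `0⁺` and `+∞` at `+∞`, then for every `ε > 0` and every compact
set `C ⊆ E ∖ {0}` there is `κ > 0` with `I(tu) ≥ κ t²` for all `u ∈ C` and `t ≥ ε`. -/
theorem uniform_quadratic_lower_bound_on_compacts
    {E : Type*} [NormedAddCommGroup E] [NormedSpace ℝ E]
    (I : E → ℝ) (hIcont : Continuous I)
    (hI2 : I 0 = 0 ∧ ∀ u : E, u ≠ 0 → 0 < I u)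
    (hI3mono : ∀ u : E, u ≠ 0 → MonotoneOn (fun t : ℝ => I (t • u) / t ^ 2) (Ioi 0))
    (hI3zero : ∀ u : E, u ≠ 0 → Tendsto (fun t : ℝ => I (t • u) / t ^ 2) (𝓝[>] 0) (𝓝 0))
    (hI3top : ∀ u : E, u ≠ 0 → Tendsto (fun t : ℝ => I (t • u) / t ^ 2) atTop atTop) :
    ∀ ε : ℝ, 0 < ε → ∀ C : Set E, IsCompact C → C ⊆ {u : E | u ≠ 0} →
      ∃ κ : ℝ, 0 < κ ∧ ∀ u ∈ C, ∀ t : ℝ, ε ≤ t → κ * t ^ 2 ≤ I (t • u) := by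
  intro ε hε C hC hC0
  rcases C.eq_empty_or_nonempty with rfl | hne
  · exact ⟨1, one_pos, fun u hu => absurd hu (Set.notMem_empty u)⟩
  obtain ⟨v, hv, hmin⟩ := hC.exists_isMinOn hne
    (f := fun u : E => I (ε • u))
    ((hIcont.comp (continuous_const_smul ε)).continuousOn)
  have hpos : 0 < I (ε • v) := hI2.2 _ (smul_ne_zero hε.ne' (hC0 hv))
  refine ⟨I (ε • v) / ε ^ 2, by positivity, fun u hu t ht => ?_⟩
  have ht0 : 0 < t := lt_of_lt_of_le hε ht
  have h1 : I (ε • v) ≤ I (ε • u) := hmin hu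
  have h2 : I (ε • u) / ε ^ 2 ≤ I (t • u) / t ^ 2 :=
    hI3mono u (hC0 hu) (mem_Ioi.2 hε) (mem_Ioi.2 ht0) ht
  have h3 : I (ε • v) / ε ^ 2 ≤ I (ε • u) / ε ^ 2 := by gcongr
  exact (le_div_iff₀ (by positivity)).1 (h3.trans h2)
end

section
/- Under assumptions (I1)–(I4), c_λ/(λ_{n+1} − λ) → 0 as λ → λ_{n+1} from the left; that is, for every δ > 0 there exists λ' ∈ (λ_n, λ_{n+1}) such that c_λ ≤ δ (λ_{n+1} − λ) for all λ ∈ (λ', λ_{n+1}). -/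
open Filter Topology Set
open scoped InnerProductSpace

/- Abstract setting: `E = D(A^{1/2})` is a real Hilbert space in which the rescaled
eigenfunctions `ζ_k / √(1+λ_k)` form a Hilbert basis (encoded by `hON` and `hdense` below);
the `H`-inner product of `u, v ∈ E` is recovered as `∑ₖ ⟨u,ζ_k⟩_H ⟨v,ζ_k⟩_H`, where
`⟨u,ζ_k⟩_H = ⟨u,ζ_k⟩_E / (1+λ_k)`. -/

variable {E : Type*} [NormedAddCommGroup E] [InnerProductSpace ℝ E] [CompleteSpace E]

/-- The `H`-inner-product coefficient `⟨u, ζ_k⟩_H = ⟨u, ζ_k⟩_E / (1 + λ_k)`. -/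
noncomputable def coefH (lam : ℕ → ℝ) (ζ : ℕ → E) (u : E) (k : ℕ) : ℝ :=
  ⟪u, ζ k⟫_ℝ / (1 + lam k)

/-- The square of the `H`-norm: `‖u‖_H² = ∑ₖ ⟨u,ζ_k⟩_H²`. -/
noncomputable def normHsq (lam : ℕ → ℝ) (ζ : ℕ → E) (u : E) : ℝ :=
  ∑' k, (coefH lam ζ u k) ^ 2

/-- The symmetric bilinear form `q_λ(u,v) = ∑ₖ (λ_k − λ) ⟨u,ζ_k⟩_H ⟨v,ζ_k⟩_H`. -/
noncomputable def qForm (lam : ℕ → ℝ) (ζ : ℕ → E) (lambda : ℝ) (u v : E) : ℝ :=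
  ∑' k, (lam k - lambda) * (coefH lam ζ u k * coefH lam ζ v k)

/-- The action functional `J_λ(u) = ½ q_λ(u) − I(u)`. -/
noncomputable def Jfun (lam : ℕ → ℝ) (ζ : ℕ → E) (I : E → ℝ) (lambda : ℝ) (u : E) : ℝ :=
  qForm lam ζ lambda u u / 2 - I u

/-- `E_n`, the span of the eigenfunctions `ζ_0, …, ζ_n` (the first `n+1` of them). -/
noncomputable def Esub (ζ : ℕ → E) (n : ℕ) : Submodule ℝ E :=
  Submodule.span ℝ (ζ '' {k : ℕ | k ≤ n})

/-- `F_n(u) = E_n ⊕ ℝ u`. -/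
noncomputable def Fsub (ζ : ℕ → E) (n : ℕ) (u : E) : Submodule ℝ E :=
  Esub ζ n ⊔ Submodule.span ℝ {u}

/-- `F_n(u)⁺ = E_n ⊕ ℝ⁺ u = {v + t u : v ∈ E_n, t > 0}`. -/
def FsubPlus (ζ : ℕ → E) (n : ℕ) (u : E) : Set E :=
  {w | ∃ v ∈ Esub ζ n, ∃ t : ℝ, 0 < t ∧ w = v + t • u}

/-- The derivative of `J_λ` at `u` applied to `w`: `J_λ'(u)[w] = q_λ(u,w) − I'(u)[w]`. -/
noncomputable def Jderiv (lam : ℕ → ℝ) (ζ : ℕ → E) (I' : E → E →L[ℝ] ℝ)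
    (lambda : ℝ) (u w : E) : ℝ :=
  qForm lam ζ lambda u w - I' u w

/-- The Nehari–Pankov set `NP_λ = {u ∈ E ∖ E_n : J_λ'(u)|_{F_n(u)} = 0}`. -/
def NehariPankov (lam : ℕ → ℝ) (ζ : ℕ → E) (I' : E → E →L[ℝ] ℝ)
    (n : ℕ) (lambda : ℝ) : Set E :=
  {u | u ∉ Esub ζ n ∧ ∀ w ∈ Fsub ζ n u, Jderiv lam ζ I' lambda u w = 0}

/-- The ground-state level `c_λ = inf_{NP_λ} J_λ`. -/
noncomputable def clevel (lam : ℕ → ℝ) (ζ : ℕ → E) (I : E → ℝ) (I' : E → E →L[ℝ] ℝ)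
    (n : ℕ) (lambda : ℝ) : ℝ :=
  sInf (Jfun lam ζ I lambda '' NehariPankov lam ζ I' n lambda)

/-- The set `Q_λ` of minimizers of `J_λ` on `NP_λ`. -/
def Qset (lam : ℕ → ℝ) (ζ : ℕ → E) (I : E → ℝ) (I' : E → E →L[ℝ] ℝ)
    (n : ℕ) (lambda : ℝ) : Set E :=
  {u | u ∈ NehariPankov lam ζ I' n lambda ∧
    Jfun lam ζ I lambda u = clevel lam ζ I I' n lambda}

/-- `E_n^⊥ = {w ∈ E : ⟨w, ζ_k⟩_H = 0 for k = 0, …, n}`. -/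
def EsubPerp (lam : ℕ → ℝ) (ζ : ℕ → E) (n : ℕ) : Set E :=
  {w | ∀ k ≤ n, coefH lam ζ w k = 0}

lemma coefH_add' (lam : ℕ → ℝ) (ζ : ℕ → E) (u w : E) (k : ℕ) :
    coefH lam ζ (u + w) k = coefH lam ζ u k + coefH lam ζ w k := by
  simp [coefH, inner_add_left, add_div]

lemma coefH_smul' (lam : ℕ → ℝ) (ζ : ℕ → E) (s : ℝ) (u : E) (k : ℕ) :
    coefH lam ζ (s • u) k = s * coefH lam ζ u k := by
  simp [coefH, inner_smul_left, mul_div_assoc]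

lemma coefH_cont' (lam : ℕ → ℝ) (ζ : ℕ → E) (k : ℕ) :
    Continuous (fun u => coefH lam ζ u k) := by
  unfold coefH
  fun_prop

lemma coefH_zero_of_mem (lam : ℕ → ℝ) (ζ : ℕ → E)
    (hON : ∀ j k, ⟪ζ j, ζ k⟫_ℝ = if j = k then 1 + lam k else 0)
    (n : ℕ) (u : E) (hu : u ∈ Esub ζ n) (k : ℕ) (hk : n < k) : coefH lam ζ u k = 0 := by
  unfold Esub at hu
  induction hu using Submodule.span_induction with
  | mem x hx =>
    obtain ⟨j, hj, rfl⟩ := hx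
    have : j ≠ k := by
      have : j ≤ n := hj
      omega
    simp [coefH, hON, this]
  | zero => simp [coefH]
  | add x y _ _ hx hy => rw [coefH_add', hx, hy, add_zero]
  | smul a x _ hx => rw [coefH_smul', hx, mul_zero]

lemma qForm_eq_sum (lam : ℕ → ℝ) (ζ : ℕ → E)
    (hON : ∀ j k, ⟪ζ j, ζ k⟫_ℝ = if j = k then 1 + lam k else 0)
    (n : ℕ) (lambda : ℝ) (u w : E) (hu : u ∈ Esub ζ n) :
    qForm lam ζ lambda u w =
      ∑ k ∈ Finset.range (n + 1), (lam k - lambda) * (coefH lam ζ u k * coefH lam ζ w k) := by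
  unfold qForm
  apply tsum_eq_sum
  intro k hk
  rw [coefH_zero_of_mem lam ζ hON n u hu k (by simpa using hk)]
  simp

lemma bessel_coefH (lam : ℕ → ℝ) (ζ : ℕ → E) (hlam_nonneg : ∀ k, 0 ≤ lam k)
    (hON : ∀ j k, ⟪ζ j, ζ k⟫_ℝ = if j = k then 1 + lam k else 0)
    (s : Finset ℕ) (u : E) :
    ∑ k ∈ s, (coefH lam ζ u k) ^ 2 ≤ ‖u‖ ^ 2 := by
  have hpos : ∀ k, 0 < 1 + lam k := fun k => by linarith [hlam_nonneg k]
  have ho : Orthonormal ℝ (fun k => (√(1 + lam k))⁻¹ • ζ k) := by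
    rw [orthonormal_iff_ite]
    intro i j
    rw [inner_smul_left, inner_smul_right, hON]
    by_cases h : i = j
    · subst h
      have := Real.mul_self_sqrt (hpos i).le
      have h2 : √(1 + lam i) ≠ 0 := (Real.sqrt_pos.2 (hpos i)).ne'
      simp
      field_simp
      nlinarith
    · simp [h]
  refine le_trans (Finset.sum_le_sum fun k _ => ?_) (ho.sum_inner_products_le (s := s) u)
  rw [inner_smul_left, coefH, real_inner_comm, norm_mul, mul_pow, Real.norm_eq_abs,
    Real.norm_eq_abs, sq_abs, sq_abs]
  simp only [conj_trivial, inv_pow]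
  rw [Real.sq_sqrt (hpos k).le, div_pow, div_eq_inv_mul]
  apply mul_le_mul_of_nonneg_right _ (sq_nonneg _)
  apply inv_anti₀ (hpos k)
  nlinarith [hpos k, hlam_nonneg k]

/-- `c_λ / (λ_{n+1} − λ) → 0` as `λ → λ_{n+1}⁻`: for every `δ > 0` there
is `λ' ∈ (λ_n, λ_{n+1})` with `c_λ ≤ δ (λ_{n+1} − λ)` for all `λ ∈ (λ', λ_{n+1})`. -/
theorem clevel_flat_near_top_of_gap {E : Type*} [NormedAddCommGroup E]
    [InnerProductSpace ℝ E] [CompleteSpace E]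
    (lam : ℕ → ℝ) (ζ : ℕ → E)
    (hlam_mono : Monotone lam) (hlam_nonneg : ∀ k, 0 ≤ lam k)
    (hlam_top : Tendsto lam atTop atTop)
    (hON : ∀ j k, ⟪ζ j, ζ k⟫_ℝ = if j = k then 1 + lam k else 0)
    (hdense : (Submodule.span ℝ (Set.range ζ)).topologicalClosure = ⊤)
    (I : E → ℝ) (I' : E → E →L[ℝ] ℝ)
    (hIderiv : ∀ u, HasFDerivAt I (I' u) u) (hIderiv_cont : Continuous I')
    (hI1 : ∀ (u : ℕ → E) (a : E),
      (∀ φ : E →L[ℝ] ℝ, Tendsto (fun j => φ (u j)) atTop (𝓝 (φ a))) →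
      Tendsto (fun j => I (u j)) atTop (𝓝 (I a)))
    (hI2 : I 0 = 0 ∧ ∀ u : E, u ≠ 0 → 0 < I u)
    (hI3mono : ∀ u : E, u ≠ 0 → MonotoneOn (fun t : ℝ => I (t • u) / t ^ 2) (Ioi 0))
    (hI3zero : ∀ u : E, u ≠ 0 → Tendsto (fun t : ℝ => I (t • u) / t ^ 2) (𝓝[>] 0) (𝓝 0))
    (hI3top : ∀ u : E, u ≠ 0 → Tendsto (fun t : ℝ => I (t • u) / t ^ 2) atTop atTop)
    (hI4 : ∀ u : E, u ≠ 0 → ∀ v : E, ∀ s : ℝ, -1 ≤ s →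
      I u - I ((1 + s) • u + v) + I' u ((s * (s / 2 + 1)) • u + (1 + s) • v) ≤ 0)
    (hI4strict : ∀ u : E, u ≠ 0 → ∀ s : ℝ, -1 ≤ s → s ≠ 0 →
      I u - I ((1 + s) • u) + I' u ((s * (s / 2 + 1)) • u) < 0)
    (n : ℕ)
    (hgap : lam n < lam (n + 1)) :
    ∀ δ : ℝ, 0 < δ → ∃ lam' ∈ Ioo (lam n) (lam (n + 1)),
      ∀ lambda ∈ Ioo lam' (lam (n + 1)),
        clevel lam ζ I I' n lambda ≤ δ * (lam (n + 1) - lambda) := by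
  intro δ hδ
  set F := Esub ζ (n + 1) with hF
  have hpos : ∀ k, 0 < 1 + lam k := fun k => by linarith [hlam_nonneg k]
  have hIc : Continuous I := continuous_iff_continuousAt.2 fun u => (hIderiv u).continuousAt
  have : FiniteDimensional ℝ F :=
    FiniteDimensional.span_of_finite ℝ ((Set.finite_le_nat (n + 1)).image ζ)
  set r := √(2 * δ) with hr
  have hr0 : 0 < r := Real.sqrt_pos.2 (by linarith)
  have hr2 : r ^ 2 = 2 * δ := Real.sq_sqrt (by linarith)
  have hcomp : IsCompact ((F : Set E) ∩ Metric.closedBall 0 r) := by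
    have h := (isCompact_closedBall (0 : F) r).image (continuous_subtype_val (p := (· ∈ F)))
    convert h using 1
    ext x
    simp only [Set.mem_inter_iff, SetLike.mem_coe, Metric.mem_closedBall, dist_zero_right,
      Set.mem_image, Subtype.exists, exists_and_right, exists_eq_right]
    constructor
    · rintro ⟨h1, h2⟩
      exact ⟨h1, h2⟩
    · rintro ⟨h1, h2⟩
      exact ⟨h1, h2⟩
  have hsph : IsCompact (((F : Set E) ∩ Metric.closedBall 0 r) ∩ Metric.sphere 0 r) :=
    hcomp.inter_right Metric.isClosed_sphere
  obtain ⟨m, hm, hmI⟩ := hsph.exists_forall_le' (f := I) hIc.continuousOn (a := 0) (by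
    rintro u ⟨_, hu⟩
    apply hI2.2
    rintro rfl
    simp at hu
    exact hr0.ne hu)
  have hmd : 0 < m / δ := div_pos hm hδ
  refine ⟨max ((lam n + lam (n + 1)) / 2) (lam (n + 1) - m / δ), ⟨?_, ?_⟩, ?_⟩
  · exact lt_max_of_lt_left (by linarith)
  · exact max_lt (by linarith) (by linarith)
  rintro l ⟨hl1, hl2⟩
  have hl3 := (le_max_left _ _).trans_lt hl1
  have hl4 := (le_max_right _ _).trans_lt hl1
  have hln : lam n < l := by linarith
  have hε : 0 < lam (n + 1) - l := by linarith
  have hεm : (lam (n + 1) - l) * δ < m := by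
    have : lam (n + 1) - l < m / δ := by linarith
    exact (lt_div_iff₀ hδ).1 this
  set B : E → E → ℝ := fun u w =>
    ∑ k ∈ Finset.range (n + 1 + 1), (lam k - l) * (coefH lam ζ u k * coefH lam ζ w k)
    with hB
  have hq : ∀ u ∈ F, ∀ w, qForm lam ζ l u w = B u w := by
    intro u hu w
    rw [qForm_eq_sum lam ζ hON (n + 1) l u w hu, hB]
  have hBle : ∀ u, B u u ≤ (lam (n + 1) - l) * ‖u‖ ^ 2 := by
    intro u
    refine le_trans ?_ (mul_le_mul_of_nonneg_left
      (bessel_coefH lam ζ hlam_nonneg hON (Finset.range (n + 1 + 1)) u) hε.le)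
    rw [Finset.mul_sum, hB]
    refine Finset.sum_le_sum fun k hk => ?_
    have h1 : lam k ≤ lam (n + 1) := hlam_mono (by simp at hk; omega)
    nlinarith [sq_nonneg (coefH lam ζ u k)]
  have hB0 : ∀ u, coefH lam ζ u (n + 1) = 0 → B u u ≤ 0 := by
    intro u hu
    simp only [hB]
    apply Finset.sum_nonpos
    intro k hk
    rcases Nat.lt_or_ge n k with h | h
    · have : k = n + 1 := by simp at hk; omega
      rw [this, hu]; simp
    · have h1 : lam k ≤ lam n := hlam_mono h
      nlinarith [sq_nonneg (coefH lam ζ u k)]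
  set G : E → ℝ := fun u => B u u / 2 - I u with hG
  have hInn : ∀ u, 0 ≤ I u := fun u => by
    by_cases h : u = 0
    · rw [h, hI2.1]
    · exact (hI2.2 u h).le
  have hBc : Continuous fun u => B u u := by
    simp only [hB]
    refine continuous_finsetSum _ fun k _ => ?_
    have := coefH_cont' lam ζ k
    fun_prop
  have hGc : Continuous G := (hBc.div_const 2).sub hIc
  set K := ((F : Set E) ∩ Metric.closedBall 0 r) ∩ {u | 0 ≤ coefH lam ζ u (n + 1)} with hK
  have hKc : IsCompact K :=
    hcomp.inter_right (isClosed_le continuous_const (coefH_cont' lam ζ (n + 1)))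
  have hzF : ζ (n + 1) ∈ F := Submodule.subset_span ⟨n + 1, by simp, rfl⟩
  have hz0 : ζ (n + 1) ≠ 0 := by
    intro h
    have := hON (n + 1) (n + 1)
    rw [h] at this
    simp at this
    linarith [hpos (n + 1)]
  have hzc : ∀ k, coefH lam ζ (ζ (n + 1)) k = if n + 1 = k then 1 else 0 := by
    intro k
    rw [coefH, hON]
    split_ifs
    · exact div_self (hpos k).ne'
    · simp
  -- a point with positive energy
  have hex : ∃ u ∈ K, 0 < G u := by
    have h1 := (hI3zero _ hz0).eventually (gt_mem_nhds (half_pos hε))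
    have h2 : ∀ᶠ t : ℝ in 𝓝[>] 0, ‖t • ζ (n + 1)‖ < r := by
      have hc : Tendsto (fun t : ℝ => ‖t • ζ (n + 1)‖) (𝓝 0) (𝓝 ‖(0 : ℝ) • ζ (n + 1)‖) :=
        Continuous.tendsto (by fun_prop) 0
      rw [zero_smul, norm_zero] at hc
      exact (hc.mono_left nhdsWithin_le_nhds).eventually (gt_mem_nhds hr0)
    obtain ⟨t, ⟨ht1, ht2⟩, ht3⟩ := ((h1.and h2).and self_mem_nhdsWithin).exists
    have ht : 0 < t := ht3
    refine ⟨t • ζ (n + 1), ⟨⟨F.smul_mem _ hzF, ?_⟩, ?_⟩, ?_⟩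
    · rw [mem_closedBall_zero_iff]; exact ht2.le
    · simp [coefH_smul', hzc, ht.le]
    · have hBt : B (t • ζ (n + 1)) (t • ζ (n + 1)) = (lam (n + 1) - l) * t ^ 2 := by
        simp only [hB, coefH_smul', hzc]
        rw [Finset.sum_eq_single (n + 1)]
        · rw [if_pos rfl]; ring
        · intro b _ hb
          simp [hb.symm]
        · intro h; simp at h
      rw [div_lt_iff₀ (by positivity)] at ht1
      simp only [hG, hBt]
      linarith
  obtain ⟨u1, hu1K, hu1⟩ := hex
  obtain ⟨u, huK, hmax⟩ := hKc.exists_isMaxOn ⟨u1, hu1K⟩ hGc.continuousOn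
  have hGu : 0 < G u := hu1.trans_le (hmax hu1K)
  obtain ⟨⟨huF, hur⟩, hut⟩ := huK
  rw [mem_closedBall_zero_iff] at hur
  have hGr : G u ≤ δ * (lam (n + 1) - l) - I u := by
    have h1 := hBle u
    have h2 : ‖u‖ ^ 2 ≤ 2 * δ := hr2 ▸ pow_le_pow_left₀ (norm_nonneg u) hur 2
    simp only [hG]
    nlinarith
  have hur' : ‖u‖ < r := by
    refine lt_of_le_of_ne hur fun h => ?_
    have := hmI u ⟨⟨huF, mem_closedBall_zero_iff.2 hur⟩, mem_sphere_zero_iff_norm.2 h⟩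
    linarith
  have hut' : 0 < coefH lam ζ u (n + 1) := by
    refine lt_of_le_of_ne hut fun h => ?_
    have h1 := hB0 u h.symm
    have h2 := hInn u
    simp only [hG] at hGu
    linarith
  have hNP : u ∈ NehariPankov lam ζ I' n l := by
    refine ⟨fun h => hut'.ne' (coefH_zero_of_mem lam ζ hON n u h (n + 1) (by omega)), ?_⟩
    intro w hw
    have hwF : w ∈ F := by
      have hle : Fsub ζ n u ≤ F := by
        refine sup_le (Submodule.span_mono (Set.image_mono fun k hk => ?_)) ?_
        · exact Nat.le_succ_of_le hk
        · rw [Submodule.span_singleton_le_iff_mem]; exact huF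
      exact hle hw
    have hline : Continuous fun s : ℝ => u + s • w := by fun_prop
    have hloc : IsLocalMax (fun s : ℝ => G (u + s • w)) 0 := by
      have e1 : ∀ᶠ s : ℝ in 𝓝 0, ‖u + s • w‖ < r :=
        (hline.norm.tendsto 0).eventually (gt_mem_nhds (by simpa using hur'))
      have e2 : ∀ᶠ s : ℝ in 𝓝 0, 0 < coefH lam ζ (u + s • w) (n + 1) :=
        (((coefH_cont' lam ζ (n + 1)).comp hline).tendsto 0).eventually
          (lt_mem_nhds (by simpa using hut'))
      filter_upwards [e1, e2] with s h1 h2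
      have := hmax (a := u + s • w) ⟨⟨F.add_mem huF (F.smul_mem _ hwF),
        mem_closedBall_zero_iff.2 h1.le⟩, h2.le⟩
      simpa using this
    have hBs : ∀ s : ℝ, B (u + s • w) (u + s • w) = B u u + 2 * s * B u w + s ^ 2 * B w w := by
      intro s
      simp only [hB, coefH_add', coefH_smul', Finset.mul_sum, ← Finset.sum_add_distrib]
      refine Finset.sum_congr rfl fun k _ => ?_
      ring
    have hd1 : HasDerivAt (fun s : ℝ => B (u + s • w) (u + s • w) / 2) (B u w) 0 := by
      have ha : HasDerivAt (fun s : ℝ => s) 1 0 := hasDerivAt_id 0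
      have := (((((ha.const_mul 2).mul_const (B u w)).const_add (B u u)).add
        ((ha.pow 2).mul_const (B w w))).div_const 2)
      refine (this.congr_of_eventuallyEq (Eventually.of_forall fun s => ?_)).congr_deriv ?_
      · simp only [hBs, Pi.add_apply, Pi.pow_apply]
      · simp
    have hd2 : HasDerivAt (fun s : ℝ => I (u + s • w)) (I' u w) 0 := by
      have ha : HasDerivAt (fun s : ℝ => u + s • w) w 0 := by
        simpa using ((hasDerivAt_id (0 : ℝ)).smul_const w).const_add u
      have hb : HasFDerivAt I (I' u) (u + (0 : ℝ) • w) := by simpa using hIderiv u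
      exact hb.comp_hasDerivAt 0 ha
    have := hloc.hasDerivAt_eq_zero (hd1.sub hd2)
    rw [Jderiv, hq u huF w]
    exact this
  have hJ : Jfun lam ζ I l u = G u := by
    rw [Jfun, hq u huF u]
  have hfin : Jfun lam ζ I l u ≤ δ * (lam (n + 1) - l) := by
    rw [hJ]; linarith [hInn u]
  unfold clevel
  by_cases hbdd : BddBelow (Jfun lam ζ I l '' NehariPankov lam ζ I' n l)
  · exact (csInf_le hbdd ⟨u, hNP, rfl⟩).trans hfin
  · rw [Real.sInf_of_not_bddBelow hbdd]
    positivity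
end

section
/- Let f : ℝ → ℝ be continuous and satisfy (f1). Then: (1) f(u) > 0 for u > 0 and f(u) < 0 for u < 0; (2) F is decreasing on (−∞, 0] and increasing on [0, +∞); (3) for every u ∈ ℝ∖{0}, the function t ↦ F(tu)/t² is nondecreasing on (0, +∞), tends to 0 as t → 0⁺, and tends to +∞ as t → +∞. -/
open Filter Topology Set MeasureTheory

/-- Assumption (f1): `s ↦ f(s)/|s|` is strictly increasing on `ℝ ∖ {0}`, tends to `0`
as `s → 0`, to `+∞` as `s → +∞` and to `−∞` as `s → −∞`. -/
def F1Cond (f : ℝ → ℝ) : Prop :=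
  StrictMonoOn (fun s => f s / |s|) {s : ℝ | s ≠ 0} ∧
  Tendsto (fun s => f s / |s|) (𝓝[≠] (0 : ℝ)) (𝓝 0) ∧
  Tendsto (fun s => f s / |s|) atTop atTop ∧
  Tendsto (fun s => f s / |s|) atBot atBot

/-- The primitive `F(s) = ∫₀ˢ f(t) dt`. -/
noncomputable def Fprim (f : ℝ → ℝ) (s : ℝ) : ℝ := ∫ t in (0 : ℝ)..s, f t

/-- The potential `V_λ(s) = F(s) + (λ/2) s²` of the ODE `−u″ = λu + f(u)`. -/
noncomputable def Vpot (f : ℝ → ℝ) (lambda s : ℝ) : ℝ := Fprim f s + lambda / 2 * s ^ 2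

/-- Key one-sided lemma: if `k(t)/t` is nondecreasing and positive on `(0,∞)`, tends to `0` at `0⁺`
and to `∞` at `∞`, then the same holds for `(∫₀ᵗ k)/t²`. -/
theorem aux_prim (k : ℝ → ℝ) (hk : Continuous k) (hpos : ∀ t, 0 < t → 0 < k t)
    (hmono : ∀ a b, 0 < a → a ≤ b → k a / a ≤ k b / b)
    (h0 : Tendsto (fun t => k t / t) (𝓝[>] 0) (𝓝 0))
    (hinf : Tendsto (fun t => k t / t) atTop atTop) :
    MonotoneOn (fun t : ℝ => (∫ x in (0:ℝ)..t, k x) / t ^ 2) (Ioi 0) ∧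
    Tendsto (fun t : ℝ => (∫ x in (0:ℝ)..t, k x) / t ^ 2) (𝓝[>] 0) (𝓝 0) ∧
    Tendsto (fun t : ℝ => (∫ x in (0:ℝ)..t, k x) / t ^ 2) atTop atTop := by
  have hint : ∀ a b, IntervalIntegrable k volume a b := fun a b => hk.intervalIntegrable a b
  have hkm : ∀ a b, 0 < a → a ≤ b → k a ≤ k b := by
    intro a b ha hab
    have h := hmono a b ha hab
    have hb : 0 < b := ha.trans_le hab
    have h1 : k a = k a / a * a := by field_simp
    have h2 : k b = k b / b * b := by field_simp
    rw [h1, h2]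
    exact mul_le_mul h hab ha.le (div_pos (hpos b hb) hb).le
  refine ⟨?_, ?_, ?_⟩
  · intro a ha b hb hab
    have ha' : (0:ℝ) < a := ha
    have hb' : (0:ℝ) < b := hb
    have key : ∀ t : ℝ, 0 < t →
        (∫ x in (0:ℝ)..t, k x) / t ^ 2 = ∫ s in (0:ℝ)..1, k (t * s) / t := by
      intro t ht
      rw [intervalIntegral.integral_div, intervalIntegral.integral_comp_mul_left k ht.ne']
      simp only [mul_zero, mul_one, smul_eq_mul]
      field_simp
    show (∫ x in (0:ℝ)..a, k x) / a ^ 2 ≤ (∫ x in (0:ℝ)..b, k x) / b ^ 2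
    rw [key a ha', key b hb']
    apply intervalIntegral.integral_mono_on_of_le_Ioo zero_le_one
    · exact Continuous.intervalIntegrable (by fun_prop) _ _
    · exact Continuous.intervalIntegrable (by fun_prop) _ _
    · intro s hs
      have hs0 := hs.1
      have h := hmono (a * s) (b * s) (by positivity) (by gcongr)
      have h1 : k (a * s) / a = k (a * s) / (a * s) * s := by field_simp
      have h2 : k (b * s) / b = k (b * s) / (b * s) * s := by field_simp
      rw [h1, h2]
      gcongr
  · refine tendsto_of_tendsto_of_tendsto_of_le_of_le' tendsto_const_nhds h0 ?_ ?_
    · filter_upwards [self_mem_nhdsWithin] with t ht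
      have ht' : (0:ℝ) < t := ht
      have := intervalIntegral.integral_mono_on_of_le_Ioo ht'.le
        (intervalIntegrable_const (c := (0:ℝ))) (hint 0 t) (fun x hx => (hpos x hx.1).le)
      simp only [intervalIntegral.integral_const, smul_zero] at this
      positivity
    · filter_upwards [self_mem_nhdsWithin] with t ht
      have ht' : (0:ℝ) < t := ht
      have := intervalIntegral.integral_mono_on_of_le_Ioo ht'.le
        (hint 0 t) (intervalIntegrable_const (c := k t)) (fun x hx => hkm x t hx.1 hx.2.le)
      simp only [intervalIntegral.integral_const, smul_eq_mul, sub_zero] at this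
      rw [div_le_div_iff₀ (by positivity) ht']
      nlinarith
  · have hhalf : Tendsto (fun t : ℝ => (1/4) * (k (t/2) / (t/2))) atTop atTop :=
      (hinf.comp (tendsto_id.atTop_div_const (by norm_num : (0:ℝ) < 2))).const_mul_atTop
        (by norm_num)
    refine tendsto_atTop_mono' _ ?_ hhalf
    filter_upwards [eventually_gt_atTop 0] with t ht
    have e1 := intervalIntegral.integral_mono_on_of_le_Ioo (by positivity : (0:ℝ) ≤ t/2)
        (intervalIntegrable_const (c := (0:ℝ))) (hint 0 (t/2)) (fun x hx => (hpos x hx.1).le)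
    have e2 := intervalIntegral.integral_mono_on_of_le_Ioo (by linarith : t/2 ≤ t)
        (intervalIntegrable_const (c := k (t/2))) (hint (t/2) t)
        (fun x hx => hkm (t/2) x (by positivity) hx.1.le)
    simp only [intervalIntegral.integral_const, smul_zero, smul_eq_mul] at e1 e2
    have e3 := intervalIntegral.integral_add_adjacent_intervals (hint 0 (t/2)) (hint (t/2) t)
    have e4 : (1/4) * (k (t/2) / (t/2)) = ((t - t/2) * k (t/2)) / t^2 := by
      field_simp
      ring
    rw [e4]
    gcongr
    linarith

/-- Basic properties of `f` and `F` under (f1): sign of `f`, monotonicity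
of `F` on `(−∞,0]` and `[0,∞)`, and behaviour of `t ↦ F(tu)/t²` on `(0,∞)`. -/
theorem properties_of_f_and_F (f : ℝ → ℝ) (hf : Continuous f) (hf1 : F1Cond f) :
    (∀ u : ℝ, 0 < u → 0 < f u) ∧ (∀ u : ℝ, u < 0 → f u < 0) ∧
    AntitoneOn (Fprim f) (Iic 0) ∧ MonotoneOn (Fprim f) (Ici 0) ∧
    ∀ u : ℝ, u ≠ 0 →
      MonotoneOn (fun t : ℝ => Fprim f (t * u) / t ^ 2) (Ioi 0) ∧
      Tendsto (fun t : ℝ => Fprim f (t * u) / t ^ 2) (𝓝[>] 0) (𝓝 0) ∧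
      Tendsto (fun t : ℝ => Fprim f (t * u) / t ^ 2) atTop atTop := by
  obtain ⟨hm, h0, htop, hbot⟩ := hf1
  have hp : ∀ u : ℝ, 0 < u → 0 < f u := by
    intro u hu
    have h1 : (0:ℝ) ≤ f (u/2) / |u/2| := by
      refine le_of_tendsto (h0.mono_left (nhdsWithin_mono 0 (fun x (hx : x ∈ Ioi 0) => ne_of_gt hx))) ?_
      filter_upwards [Ioo_mem_nhdsGT (by positivity : (0:ℝ) < u/2)] with x hx
      exact (hm (a := x) (b := u/2) hx.1.ne' (by positivity : u/2 ≠ 0) hx.2).le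
    have h2 : f (u/2) / |u/2| < f u / |u| :=
      hm (a := u/2) (b := u) (by positivity : u/2 ≠ 0) hu.ne' (by linarith)
    have h3 := h1.trans_lt h2
    exact (div_pos_iff_of_pos_right (abs_pos.2 hu.ne')).1 h3
  have hn : ∀ u : ℝ, u < 0 → f u < 0 := by
    intro u hu
    have hu2 : u/2 ≠ 0 := (by linarith : u/2 < 0).ne
    have h1 : f (u/2) / |u/2| ≤ 0 := by
      refine ge_of_tendsto (h0.mono_left (nhdsWithin_mono 0 (fun x (hx : x ∈ Iio 0) => ne_of_lt hx))) ?_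
      filter_upwards [Ioo_mem_nhdsLT (by linarith : u/2 < 0)] with x hx
      exact (hm (a := u/2) (b := x) hu2 hx.2.ne hx.1).le
    have h2 : f u / |u| < f (u/2) / |u/2| :=
      hm (a := u) (b := u/2) hu.ne hu2 (by linarith)
    have h3 := h2.trans_le h1
    by_contra hc
    exact absurd h3 (not_lt.2 (div_nonneg (not_lt.1 hc) (abs_nonneg u)))
  have hint : ∀ a b, IntervalIntegrable f volume a b := fun a b => hf.intervalIntegrable a b
  refine ⟨hp, hn, ?_, ?_, ?_⟩
  · intro a ha b hb hab
    have hb' : b ≤ 0 := hb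
    have e := intervalIntegral.integral_add_adjacent_intervals (hint 0 a) (hint a b)
    have e1 := intervalIntegral.integral_mono_on_of_le_Ioo hab (hint a b)
      (intervalIntegrable_const (c := (0:ℝ))) (fun x hx => (hn x (hx.2.trans_le hb')).le)
    simp only [intervalIntegral.integral_const, smul_zero] at e1
    unfold Fprim
    linarith
  · intro a ha b hb hab
    have ha' : 0 ≤ a := ha
    have e := intervalIntegral.integral_add_adjacent_intervals (hint 0 a) (hint a b)
    have e1 := intervalIntegral.integral_mono_on_of_le_Ioo hab
      (intervalIntegrable_const (c := (0:ℝ))) (hint a b)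
      (fun x hx => (hp x (ha'.trans_lt hx.1)).le)
    simp only [intervalIntegral.integral_const, smul_zero] at e1
    unfold Fprim
    linarith
  · intro u hu
    have hF : ∀ t : ℝ, Fprim f (t * u) = ∫ x in (0:ℝ)..t, u * f (x * u) := by
      intro t
      rw [intervalIntegral.integral_const_mul, intervalIntegral.integral_comp_mul_right f hu]
      simp only [zero_mul, smul_eq_mul, Fprim]
      field_simp
    have hrep : ∀ t : ℝ, 0 < t → u * f (t * u) / t = u * |u| * (f (t * u) / |t * u|) := by
      intro t ht
      have : |u| ≠ 0 := abs_ne_zero.2 hu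
      rw [abs_mul, abs_of_pos ht]
      field_simp
    have hz : Tendsto (fun t : ℝ => t * u) (𝓝[>] 0) (𝓝[≠] 0) := by
      refine tendsto_nhdsWithin_iff.2 ⟨?_, ?_⟩
      · have : Tendsto (fun t : ℝ => t * u) (𝓝 0) (𝓝 (0 * u)) :=
          (continuous_id.mul continuous_const).tendsto 0
        rw [zero_mul] at this
        exact this.mono_left nhdsWithin_le_nhds
      · filter_upwards [self_mem_nhdsWithin] with t ht
        exact mul_ne_zero (ne_of_gt ht) hu
    simp only [hF]
    apply aux_prim
    · fun_prop
    · intro t ht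
      rcases lt_or_gt_of_ne hu with h | h
      · exact mul_pos_of_neg_of_neg h (hn _ (mul_neg_of_pos_of_neg ht h))
      · exact mul_pos h (hp _ (mul_pos ht h))
    · intro a b ha hab
      have hb := ha.trans_le hab
      rw [hrep a ha, hrep b hb]
      have hau : a * u ≠ 0 := mul_ne_zero ha.ne' hu
      have hbu : b * u ≠ 0 := mul_ne_zero hb.ne' hu
      rcases lt_or_gt_of_ne hu with h | h
      · exact mul_le_mul_of_nonpos_left
          (hm.monotoneOn hbu hau (mul_le_mul_of_nonpos_right hab h.le))
          (mul_nonpos_of_nonpos_of_nonneg h.le (abs_nonneg u))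
      · exact mul_le_mul_of_nonneg_left
          (hm.monotoneOn hau hbu (mul_le_mul_of_nonneg_right hab h.le))
          (mul_nonneg h.le (abs_nonneg u))
    · have h1 := (h0.comp hz).const_mul (u * |u|)
      rw [mul_zero] at h1
      refine h1.congr' ?_
      filter_upwards [self_mem_nhdsWithin] with t ht
      exact (hrep t ht).symm
    · have h1 : Tendsto (fun t : ℝ => u * |u| * (f (t * u) / |t * u|)) atTop atTop := by
        rcases lt_or_gt_of_ne hu with h | h
        · exact (hbot.comp (tendsto_id.atTop_mul_const_of_neg h)).const_mul_atBot_of_neg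
            (mul_neg_of_neg_of_pos h (abs_pos.2 hu))
        · exact (htop.comp (tendsto_id.atTop_mul_const h)).const_mul_atTop
            (mul_pos h (abs_pos.2 hu))
      refine h1.congr' ?_
      filter_upwards [eventually_gt_atTop 0] with t ht
      exact (hrep t ht).symm
end

section
/- Let f : ℝ → ℝ be continuous and satisfy (f1), let λ ≥ 0, and let u : ℝ → ℝ be a twice continuously differentiable function satisfying u″(x) = −(λ u(x) + f(u(x))) for all x, periodic with period τ > 0, whose maximum value over [0, τ] is M > 0 and whose minimum value over [0, τ] is −m with m > 0. Then (τ/8) · min(m, M)² ≤ ∫₀^τ u(x)² dx ≤ τ · max(m, M)². -/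
open Filter Topology Set MeasureTheory

lemma aux_point (s M E v g μ : ℝ) (hμ : 0 < μ) (hμM : μ ≤ M) (hs : 0 ≤ s) (hsM : s ≤ M)
    (hE : 0 < E) (hv : 0 ≤ v) (hvE : M * v ≤ s * E) (hg : g * (M - s) ≤ E - v) :
    0 ≤ E * (s ^ 2 - μ ^ 2 / 8) +
      μ ^ 2 / 8 * ((1 - 2 * s / M) * (2 * (E - v)) - s * (1 - s / M) * g) := by
  have hM : 0 < M := lt_of_lt_of_le hμ hμM
  obtain ⟨σ, rfl⟩ : ∃ σ, s = M * σ := ⟨s / M, by field_simp⟩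
  have hσ : 0 ≤ σ := by
    by_contra h
    push Not at h
    nlinarith
  have hσ1 : σ ≤ 1 := by
    by_contra h
    push Not at h
    nlinarith
  have e1 : 2 * (M * σ) / M = 2 * σ := by field_simp
  have e2 : M * σ / M = σ := by field_simp
  rw [e1, e2]
  have hv2 : v ≤ σ * E := by
    have : M * v ≤ M * (σ * E) := by linarith
    exact le_of_mul_le_mul_left this hM
  have h1 : M * σ * (1 - σ) * g ≤ σ * (E - v) := by
    have := mul_le_mul_of_nonneg_left hg hσ
    linarith
  have h2 : μ ^ 2 * σ ^ 2 ≤ (M * σ) ^ 2 := by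
    rw [mul_pow]
    gcongr
  have h3 : 0 ≤ E * (σ ^ 2 - 1 / 8) + 1 / 8 * ((E - v) * (2 - 5 * σ)) := by
    rcases le_total σ (2 / 5) with h | h
    · have : (1 - σ) * E * (2 - 5 * σ) ≤ (E - v) * (2 - 5 * σ) :=
        mul_le_mul_of_nonneg_right (by linarith) (by linarith)
      have h4 : 0 ≤ E * (13 / 8 * σ ^ 2 - 7 / 8 * σ + 1 / 8) :=
        mul_nonneg hE.le (by nlinarith [sq_nonneg (σ - 7 / 26)])
      linarith
    · have : E * (5 * σ - 2) ≥ (E - v) * (5 * σ - 2) :=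
        mul_le_mul_of_nonneg_right (by linarith) (by linarith)
      have h4 : 0 ≤ E * (σ ^ 2 - 5 / 8 * σ + 1 / 8) :=
        mul_nonneg hE.le (by nlinarith [sq_nonneg (σ - 5 / 16)])
      linarith
  have h5 := mul_nonneg (sq_nonneg μ) h3
  have h6 := mul_le_mul_of_nonneg_left h2 hE.le
  have h7 := mul_le_mul_of_nonneg_left h1 (sq_nonneg μ)
  linarith

lemma aux_tangent (V g : ℝ → ℝ) (hV : ∀ x, HasDerivAt V (g x) x) (hg : Monotone g) (a b : ℝ) :
    V a + g a * (b - a) ≤ V b := by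
  rcases lt_trichotomy a b with h | h | h
  · obtain ⟨c, hc, hc'⟩ := exists_hasDerivAt_eq_slope V g h
      (fun x _ => (hV x).continuousAt.continuousWithinAt) (fun x _ => hV x)
    rw [eq_div_iff (by linarith)] at hc'
    have := hg hc.1.le
    nlinarith
  · subst h; simp
  · obtain ⟨c, hc, hc'⟩ := exists_hasDerivAt_eq_slope V g h
      (fun x _ => (hV x).continuousAt.continuousWithinAt) (fun x _ => hV x)
    rw [eq_div_iff (by linarith)] at hc'
    have := hg hc.2.le
    nlinarith

lemma aux_f (f : ℝ → ℝ) (hf : Continuous f) (hf1 : F1Cond f) :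
    f 0 = 0 ∧ (∀ s, 0 < s → 0 < f s) ∧ Monotone f := by
  obtain ⟨hm, h0, -, -⟩ := hf1
  have hf0 : f 0 = 0 := by
    have h1 : Tendsto (fun s => f s / |s| * |s|) (𝓝[≠] (0 : ℝ)) (𝓝 (0 * |0|)) :=
      h0.mul ((continuous_abs.tendsto 0).mono_left nhdsWithin_le_nhds)
    have h2 : Tendsto f (𝓝[≠] (0 : ℝ)) (𝓝 (0 * |0|)) := by
      refine h1.congr' ?_
      filter_upwards [self_mem_nhdsWithin] with s hs
      have : |s| ≠ 0 := abs_ne_zero.mpr hs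
      field_simp
    have h3 := tendsto_nhds_unique h2 ((hf.tendsto 0).mono_left nhdsWithin_le_nhds)
    simpa using h3.symm
  have hpos : ∀ s, 0 < s → 0 < f s / |s| := by
    intro s hs
    have h1 : 0 ≤ f (s / 2) / |s / 2| := by
      refine le_of_tendsto (h0.mono_left
        (nhdsWithin_mono 0 (fun x (hx : x ∈ Ioi (0 : ℝ)) => ne_of_gt hx))) ?_
      filter_upwards [Ioo_mem_nhdsGT (show (0 : ℝ) < s / 2 by linarith)] with x hx
      exact (hm (ne_of_gt hx.1) (show s / 2 ≠ 0 by positivity) hx.2).le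
    exact lt_of_le_of_lt h1 (hm (show s / 2 ≠ 0 by positivity) (ne_of_gt hs) (by linarith))
  have hneg : ∀ s, s < 0 → f s / |s| < 0 := by
    intro s hs
    have h1 : f (s / 2) / |s / 2| ≤ 0 := by
      refine ge_of_tendsto (h0.mono_left
        (nhdsWithin_mono 0 (fun x (hx : x ∈ Iio (0 : ℝ)) => ne_of_lt hx))) ?_
      filter_upwards [Ioo_mem_nhdsLT (show s / 2 < (0 : ℝ) by linarith)] with x hx
      exact (hm (show s / 2 ≠ 0 by linarith) (ne_of_lt hx.2) hx.1).le
    exact lt_of_lt_of_le (hm (ne_of_lt hs) (show s / 2 ≠ 0 by linarith) (by linarith)) h1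
  have hp : ∀ s, 0 < s → 0 < f s := by
    intro s hs
    have := hpos s hs
    rwa [div_pos_iff_of_pos_right (abs_pos.mpr hs.ne')] at this
  have hn : ∀ s, s < 0 → f s < 0 := by
    intro s hs
    have := hneg s hs
    by_contra h
    push Not at h
    exact absurd this (not_lt.mpr (div_nonneg h (abs_nonneg s)))
  refine ⟨hf0, hp, ?_⟩
  intro s t hst
  rcases hst.eq_or_lt with rfl | hst
  · exact le_rfl
  rcases lt_trichotomy s 0 with hs | hs | hs
  · rcases lt_trichotomy t 0 with ht | ht | ht
    · have h := hm (ne_of_lt hs) (ne_of_lt ht) hst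
      simp only [abs_of_neg hs, abs_of_neg ht] at h
      rw [div_lt_div_iff₀ (by linarith) (by linarith)] at h
      have := hn t ht
      nlinarith
    · rw [ht, hf0]; exact (hn s hs).le
    · exact ((hn s hs).trans (hp t ht)).le
  · rw [hs, hf0]; exact (hp t (by linarith)).le
  · have ht : 0 < t := hs.trans hst
    have h := hm (ne_of_gt hs) (ne_of_gt ht) hst
    simp only [abs_of_pos hs, abs_of_pos ht] at h
    rw [div_lt_div_iff₀ hs ht] at h
    have := hp s hs
    nlinarith

/-- The test function. -/
noncomputable def auxH (M m s : ℝ) : ℝ := s - (max s 0) ^ 2 / M + (max (-s) 0) ^ 2 / m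

lemma aux_maxsq (s : ℝ) : HasDerivAt (fun s : ℝ => (max s 0) ^ 2) (2 * max s 0) s := by
  rcases lt_trichotomy s 0 with hs | hs | hs
  · rw [max_eq_right hs.le]
    have : HasDerivAt (fun _ : ℝ => (0 : ℝ)) (2 * 0) s := by simpa using hasDerivAt_const s (0 : ℝ)
    refine this.congr_of_eventuallyEq ?_
    filter_upwards [Iio_mem_nhds hs] with x hx
    rw [max_eq_right (le_of_lt hx)]; simp
  · subst hs
    rw [hasDerivAt_iff_isLittleO]
    simp only [max_self, sub_zero, mul_zero, smul_zero]
    have h1 : (fun x : ℝ => (max x 0) ^ 2 - 0 ^ 2) =O[𝓝 0] (fun x : ℝ => x ^ 2) := by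
      refine Asymptotics.IsBigO.of_bound 1 (Eventually.of_forall fun x => ?_)
      rw [Real.norm_eq_abs, Real.norm_eq_abs]
      rcases le_total x 0 with h | h <;> simp [h, sq_nonneg]
    have h2 : (fun x : ℝ => x ^ 2) =o[𝓝 0] (fun x : ℝ => x) := by
      simpa using (Asymptotics.isLittleO_pow_pow (𝕜 := ℝ) (m := 1) (n := 2) (by norm_num))
    exact h1.trans_isLittleO h2
  · rw [max_eq_left hs.le]
    have : HasDerivAt (fun x : ℝ => x ^ 2) (2 * s) s := by simpa using hasDerivAt_pow 2 s
    refine this.congr_of_eventuallyEq ?_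
    filter_upwards [Ioi_mem_nhds hs] with x hx
    rw [max_eq_left (le_of_lt hx)]

lemma aux_H (M m s : ℝ) :
    HasDerivAt (auxH M m) (1 - 2 * max s 0 / M - 2 * max (-s) 0 / m) s := by
  have h1 := (aux_maxsq s).div_const M
  have h2 := ((aux_maxsq (-s)).comp s (hasDerivAt_neg s)).div_const m
  have h3 := ((hasDerivAt_id s).sub h1).add h2
  refine h3.congr_deriv ?_
  ring

/-- For a `τ`-periodic `C²` solution of `u″ = −(λu + f(u))` with maximum
value `M > 0` and minimum value `−m < 0` on `[0, τ]`, one has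
`(τ/8) min(m,M)² ≤ ∫₀^τ u² ≤ τ max(m,M)²`. -/
theorem L2_bounds_for_periodic_ODE_solution (f : ℝ → ℝ) (hf : Continuous f)
    (hf1 : F1Cond f) (lambda : ℝ) (hlambda : 0 ≤ lambda)
    (u : ℝ → ℝ) (hu : ContDiff ℝ 2 u)
    (hODE : ∀ x : ℝ, deriv (deriv u) x = -(lambda * u x + f (u x)))
    (τ : ℝ) (hτ : 0 < τ) (hper : Function.Periodic u τ)
    (M m : ℝ) (hM : 0 < M) (hm : 0 < m)
    (hmax_le : ∀ x ∈ Icc 0 τ, u x ≤ M) (hmax_eq : ∃ x ∈ Icc 0 τ, u x = M)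
    (hmin_le : ∀ x ∈ Icc 0 τ, -m ≤ u x) (hmin_eq : ∃ x ∈ Icc 0 τ, u x = -m) :
    τ / 8 * min m M ^ 2 ≤ (∫ x in (0 : ℝ)..τ, u x ^ 2) ∧
    (∫ x in (0 : ℝ)..τ, u x ^ 2) ≤ τ * max m M ^ 2 := by
  obtain ⟨hf0, hfp, hfm⟩ := aux_f f hf hf1
  set g : ℝ → ℝ := fun s => lambda * s + f s with hg
  have hgm : Monotone g := fun a b hab => by
    have := hfm hab
    have := mul_le_mul_of_nonneg_left hab hlambda
    simp only [hg]; linarith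
  have hgc : Continuous g := by fun_prop
  set V : ℝ → ℝ := fun s => ∫ t in (0 : ℝ)..s, g t with hVdef
  have hV : ∀ x, HasDerivAt V (g x) x := fun x =>
    intervalIntegral.integral_hasDerivAt_right (hgc.intervalIntegrable _ _)
      (hgc.stronglyMeasurableAtFilter _ _) hgc.continuousAt
  have hV0 : V 0 = 0 := by simp [hVdef]
  have hg0 : g 0 = 0 := by simp [hg, hf0]
  have htan := aux_tangent V g hV hgm
  have hVnn : ∀ s, 0 ≤ V s := fun s => by
    have := htan 0 s
    rw [hV0, hg0] at this; linarith
  -- regularity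
  have hu1 : ContDiff ℝ 1 (deriv u) := by
    have h := (contDiff_succ_iff_deriv (n := 1) (f := u) (𝕜 := ℝ)).1 (by simpa [one_add_one_eq_two] using hu)
    exact h.2.2
  have hdu : ∀ x, HasDerivAt u (deriv u x) x := fun x =>
    (hu.differentiable (by norm_num) x).hasDerivAt
  have hddu : ∀ x, HasDerivAt (deriv u) (-(g (u x))) x := fun x => by
    have := (hu1.differentiable (by norm_num) x).hasDerivAt
    rwa [hODE x] at this
  have huc : Continuous u := hu.continuous
  have hduc : Continuous (deriv u) := hu1.continuous
  -- global bounds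
  have hub : ∀ x, u x ≤ M ∧ -m ≤ u x := fun x => by
    obtain ⟨y, hy, hxy⟩ := hper.exists_mem_Ico₀ hτ x
    rw [hxy]
    exact ⟨hmax_le y ⟨hy.1, hy.2.le⟩, hmin_le y ⟨hy.1, hy.2.le⟩⟩
  obtain ⟨x₁, -, hx₁⟩ := hmax_eq
  obtain ⟨x₂, -, hx₂⟩ := hmin_eq
  have hd1 : deriv u x₁ = 0 := by
    apply IsLocalMax.deriv_eq_zero
    exact Eventually.of_forall fun y => by rw [hx₁]; exact (hub y).1
  have hd2 : deriv u x₂ = 0 := by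
    apply IsLocalMin.deriv_eq_zero
    exact Eventually.of_forall fun y => by rw [hx₂]; exact (hub y).2
  have hen : ∀ x y, (deriv u x) ^ 2 / 2 + V (u x) = (deriv u y) ^ 2 / 2 + V (u y) := by
    have hder : ∀ x, HasDerivAt (fun x => (deriv u x) ^ 2 / 2 + V (u x)) 0 x := fun x => by
      have h1 := ((hddu x).pow 2).div_const 2
      have h2 := (hV (u x)).comp x (hdu x)
      refine (h1.add h2).congr_deriv ?_
      simp; ring
    exact is_const_of_deriv_eq_zero (fun x => (hder x).differentiableAt) (fun x => (hder x).deriv)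
  set E := V M with hE
  have henE : ∀ x, (deriv u x) ^ 2 = 2 * (E - V (u x)) := fun x => by
    have := hen x x₁
    rw [hd1, hx₁] at this
    linarith
  have hVm : V (-m) = E := by
    have := henE x₂
    rw [hd2, hx₂] at this
    linarith
  have hEpos : 0 < E := by
    have h1 := htan (M / 2) M
    have h2 : 0 < g (M / 2) := by
      have := hfp (M / 2) (by linarith)
      have : 0 ≤ lambda * (M / 2) := by positivity
      simp only [hg]; linarith
    have := hVnn (M / 2)
    nlinarith
  set μ := min m M with hμdef
  have hμ : 0 < μ := lt_min hm hM
  -- pointwise inequality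
  have hpt : ∀ x, 0 ≤ E * (u x ^ 2 - μ ^ 2 / 8) + μ ^ 2 / 8 *
      ((1 - 2 * max (u x) 0 / M - 2 * max (-(u x)) 0 / m) * (deriv u x) ^ 2
        - auxH M m (u x) * g (u x)) := fun x => by
    rw [henE x]
    have hb := hub x
    generalize u x = s at hb ⊢
    have t0 := htan s 0
    rw [hV0] at t0
    rcases le_total 0 s with hs | hs
    · have tM := htan s M
      have key := aux_point s M E (V s) (g s) μ hμ (min_le_right _ _) hs hb.1 hEpos (hVnn s)
        (by nlinarith [mul_le_mul_of_nonneg_left tM hs, mul_nonneg (sub_nonneg.2 hb.1) (sub_nonneg.2 t0)]) (by linarith)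
      unfold auxH
      rw [max_eq_left hs, max_eq_right (by linarith : -s ≤ 0)]
      convert key using 1
      ring
    · have tM := htan s (-m)
      rw [hVm] at tM
      have key := aux_point (-s) m E (V s) (-g s) μ hμ (min_le_left _ _) (by linarith)
        (by linarith) hEpos (hVnn s)
        (by nlinarith [mul_le_mul_of_nonneg_left tM (neg_nonneg.2 hs), mul_nonneg (by linarith : 0 ≤ m + s) (sub_nonneg.2 t0)]) (by linarith)
      unfold auxH
      rw [max_eq_right hs, max_eq_left (by linarith : 0 ≤ -s)]
      convert key using 1
      ring
  have hHc : Continuous (auxH M m) := by unfold auxH; fun_prop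
  set D : ℝ → ℝ := fun x => (1 - 2 * max (u x) 0 / M - 2 * max (-(u x)) 0 / m) * (deriv u x) ^ 2
        - auxH M m (u x) * g (u x) with hD
  have hDc : Continuous D := by fun_prop
  have hDder : ∀ x, HasDerivAt (fun x => auxH M m (u x) * deriv u x) (D x) x := fun x => by
    have h := ((aux_H M m (u x)).comp x (hdu x)).mul (hddu x)
    refine h.congr_deriv ?_
    simp only [hD, Function.comp]; ring
  have hDint : ∫ x in (0 : ℝ)..τ, D x = 0 := by
    rw [intervalIntegral.integral_eq_sub_of_hasDerivAt (fun x _ => hDder x)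
      (hDc.intervalIntegrable _ _)]
    have e1 : u τ = u 0 := by simpa using hper 0
    have e2 : deriv u τ = deriv u 0 := by
      have h1 : (fun x => u (x + τ)) = u := funext hper
      have h2 := deriv_comp_add_const u τ 0
      rw [h1] at h2
      simpa using h2.symm
    rw [e1, e2, sub_self]
  have husq : IntervalIntegrable (fun x => u x ^ 2) volume 0 τ :=
    (huc.pow 2).intervalIntegrable _ _
  constructor
  · have hnn : 0 ≤ ∫ x in (0 : ℝ)..τ, (E * (u x ^ 2 - μ ^ 2 / 8) + μ ^ 2 / 8 * D x) :=
      intervalIntegral.integral_nonneg hτ.le fun x _ => hpt x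
    rw [intervalIntegral.integral_add
      (Continuous.intervalIntegrable (by fun_prop) _ _)
      (Continuous.intervalIntegrable (by fun_prop) _ _),
      intervalIntegral.integral_const_mul, intervalIntegral.integral_const_mul, hDint,
      intervalIntegral.integral_sub husq (by simp), intervalIntegral.integral_const, mul_zero,
      add_zero, smul_eq_mul] at hnn
    have := nonneg_of_mul_nonneg_right hnn hEpos
    linarith
  · have hle : ∫ x in (0 : ℝ)..τ, u x ^ 2 ≤ ∫ x in (0 : ℝ)..τ, max m M ^ 2 := by
      refine intervalIntegral.integral_mono_on hτ.le husq (by simp) fun x _ => ?_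
      have h := hub x
      exact sq_le_sq' (by linarith [le_max_left m M]) (h.1.trans (le_max_right m M))
    simpa using hle
end

section
/- Let f : ℝ → ℝ be continuous and satisfy (f1) and (f2) with constants s₀ > 0, κ₀ > 1. Let λ ≥ 0 and let M, m > 0 satisfy V_λ(M) = V_λ(−m). If M ≥ κ₀ s₀ or m ≥ κ₀ s₀, then min(m, M) ≥ (1/κ₀) · max(m, M). -/
open Filter Topology Set MeasureTheory

theorem f_pos_aux {f : ℝ → ℝ} (hf1 : F1Cond f) {s : ℝ} (hs : 0 < s) : 0 < f s := by
  obtain ⟨hmono, h0, -, -⟩ := hf1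
  have h1 : (0 : ℝ) ≤ f (s / 2) / |s / 2| := by
    have ht : Tendsto (fun s => f s / |s|) (𝓝[>] (0 : ℝ)) (𝓝 0) :=
      h0.mono_left (nhdsWithin_mono _ (fun x hx => ne_of_gt hx))
    refine le_of_tendsto ht ?_
    have : Ioo (0 : ℝ) (s / 2) ∈ 𝓝[>] (0 : ℝ) := Ioo_mem_nhdsGT (by linarith)
    filter_upwards [this] with x hx
    exact (hmono (ne_of_gt hx.1) (ne_of_gt (by linarith : (0:ℝ) < s / 2)) hx.2).le
  have h2 : f (s / 2) / |s / 2| < f s / |s| :=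
    hmono (ne_of_gt (by linarith : (0:ℝ) < s / 2)) (ne_of_gt hs) (by linarith)
  have h3 : 0 < f s / |s| := lt_of_le_of_lt h1 h2
  exact (div_pos_iff_of_pos_right (abs_pos.mpr hs.ne')).mp h3

theorem f_neg_aux {f : ℝ → ℝ} (hf1 : F1Cond f) {s : ℝ} (hs : s < 0) : f s < 0 := by
  obtain ⟨hmono, h0, -, -⟩ := hf1
  have h1 : f (s / 2) / |s / 2| ≤ (0 : ℝ) := by
    have ht : Tendsto (fun s => f s / |s|) (𝓝[<] (0 : ℝ)) (𝓝 0) :=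
      h0.mono_left (nhdsWithin_mono _ (fun x hx => ne_of_lt hx))
    refine ge_of_tendsto ht ?_
    have : Ioo (s / 2) (0 : ℝ) ∈ 𝓝[<] (0 : ℝ) := Ioo_mem_nhdsLT (by linarith)
    filter_upwards [this] with x hx
    exact (hmono (ne_of_lt (by linarith : s / 2 < (0:ℝ))) (ne_of_lt hx.2) hx.1).le
  have h2 : f s / |s| < f (s / 2) / |s / 2| :=
    hmono (ne_of_lt hs) (ne_of_lt (by linarith : s / 2 < (0:ℝ))) (by linarith)
  have h3 : f s / |s| < 0 := lt_of_lt_of_le h2 h1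
  by_contra h
  push Not at h
  exact absurd (div_nonneg h (abs_nonneg s)) (not_le.mpr h3)

theorem Fprim_lt_pos {f : ℝ → ℝ} (hf : Continuous f) (hf1 : F1Cond f) {a b : ℝ}
    (ha : 0 < a) (hab : a < b) : Fprim f a < Fprim f b := by
  have h := intervalIntegral.intervalIntegral_pos_of_pos_on (hf.intervalIntegrable a b)
    (fun x hx => f_pos_aux hf1 (ha.trans hx.1)) hab
  have h2 := intervalIntegral.integral_add_adjacent_intervals
    (hf.intervalIntegrable (μ := volume) 0 a) (hf.intervalIntegrable a b)
  unfold Fprim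
  linarith

theorem Fprim_lt_neg {f : ℝ → ℝ} (hf : Continuous f) (hf1 : F1Cond f) {a b : ℝ}
    (ha : 0 < a) (hab : a < b) : Fprim f (-a) < Fprim f (-b) := by
  have h := intervalIntegral.intervalIntegral_pos_of_pos_on
    (f := fun x => - f x) (hf.neg.intervalIntegrable (-b) (-a))
    (fun x hx => neg_pos.mpr (f_neg_aux hf1 (hx.2.trans (by linarith)))) (by linarith)
  rw [intervalIntegral.integral_neg] at h
  have h2 := intervalIntegral.integral_add_adjacent_intervals
    (hf.intervalIntegrable (μ := volume) 0 (-b)) (hf.intervalIntegrable (-b) (-a))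
  unfold Fprim
  linarith

/-- Under (f1) and (f2), if `V_λ(M) = V_λ(−m)` with `M, m > 0`, `λ ≥ 0`,
and `M ≥ κ₀ s₀` or `m ≥ κ₀ s₀`, then `min(m, M) ≥ (1/κ₀) max(m, M)`. -/
theorem comparison_of_max_and_min (f : ℝ → ℝ) (hf : Continuous f) (hf1 : F1Cond f)
    (s₀ κ₀ : ℝ) (hs₀ : 0 < s₀) (hκ₀ : 1 < κ₀)
    (hf2 : ∀ s : ℝ, s₀ ≤ s →
      Fprim f (s / κ₀) ≤ Fprim f (-s) ∧ Fprim f (-s) ≤ Fprim f (κ₀ * s))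
    (lambda : ℝ) (hlambda : 0 ≤ lambda) (M m : ℝ) (hM : 0 < M) (hm : 0 < m)
    (hV : Vpot f lambda M = Vpot f lambda (-m))
    (hbig : κ₀ * s₀ ≤ M ∨ κ₀ * s₀ ≤ m) :
    1 / κ₀ * max m M ≤ min m M := by
  have hκ : 0 < κ₀ := by linarith
  unfold Vpot at hV
  have hA : M ≤ κ₀ * m := by
    by_contra hc
    push Not at hc
    have hMb : κ₀ * s₀ ≤ M := by
      rcases hbig with h | h
      · exact h
      · nlinarith
    have h1 : s₀ ≤ M / κ₀ := by rw [le_div_iff₀ hκ]; linarith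
    have h2 : m < M / κ₀ := by rw [lt_div_iff₀ hκ]; linarith
    have h3 := (hf2 _ h1).2
    rw [mul_div_cancel₀ _ hκ.ne'] at h3
    have h4 := Fprim_lt_neg hf hf1 hm h2
    have h5 : m ≤ M := by nlinarith
    have h6 : lambda / 2 * m ^ 2 ≤ lambda / 2 * M ^ 2 := by gcongr
    rw [neg_sq] at hV
    linarith
  have hB : m ≤ κ₀ * M := by
    by_contra hc
    push Not at hc
    have h5 : M ≤ m := by nlinarith
    have h1 : s₀ ≤ m := by
      rcases hbig with h | h <;> nlinarith
    have h2 : M < m / κ₀ := by rw [lt_div_iff₀ hκ]; linarith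
    have h3 := (hf2 _ h1).1
    have h4 := Fprim_lt_pos hf hf1 hM h2
    have h6 : lambda / 2 * M ^ 2 ≤ lambda / 2 * m ^ 2 := by gcongr
    rw [neg_sq] at hV
    linarith
  rw [one_div, inv_mul_le_iff₀ hκ]
  rcases le_total m M with h | h
  · rw [max_eq_right h, min_eq_left h]; exact hA
  · rw [max_eq_left h, min_eq_right h]; exact hB
end

section
/- Let f : ℝ → ℝ be continuous and satisfy (f1). Then for every λ ≥ 0 and every M > 0 the improper integral ∫₀^M (V_λ(M) − V_λ(u))^{−1/2} du is finite and satisfies ∫₀^M (V_λ(M) − V_λ(u))^{−1/2} du ≤ (π/2) · M / √(F(M)). In particular, sup_{λ ≥ 0} ∫₀^M (V_λ(M) − V_λ(u))^{−1/2} du → 0 as M → +∞. -/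
open Filter Topology Set MeasureTheory

lemma q_pos {f : ℝ → ℝ} (h : F1Cond f) {s : ℝ} (hs : 0 < s) : 0 < f s / |s| := by
  obtain ⟨hm, h0, -, -⟩ := h
  have h1 : (0:ℝ) ≤ f (s/2) / |s/2| := by
    have h2 : Tendsto (fun s => f s / |s|) (𝓝[>] (0 : ℝ)) (𝓝 0) :=
      h0.mono_left (nhdsWithin_mono _ (fun x hx => ne_of_gt hx))
    refine le_of_tendsto h2 ?_
    filter_upwards [Ioo_mem_nhdsGT (show (0:ℝ) < s/2 by linarith)] with t ht
    exact (hm (show t ≠ 0 from ht.1.ne') (show s/2 ≠ 0 by linarith) ht.2).le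
  have h3 := hm (show s/2 ≠ 0 by linarith) (show s ≠ 0 from hs.ne') (by linarith)
  exact lt_of_le_of_lt h1 h3

lemma f_pos {f : ℝ → ℝ} (h : F1Cond f) {s : ℝ} (hs : 0 < s) : 0 < f s := by
  have := q_pos h hs
  rw [abs_of_pos hs] at this
  exact (div_pos_iff_of_pos_right hs).1 this

lemma q_mono {f : ℝ → ℝ} (h : F1Cond f) {s t : ℝ} (hs : 0 < s) (hst : s ≤ t) :
    f s / s ≤ f t / t := by
  have ht : 0 < t := lt_of_lt_of_le hs hst
  have := h.1.monotoneOn (show s ≠ 0 from hs.ne') (show t ≠ 0 from ht.ne') hst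
  simpa only [abs_of_pos hs, abs_of_pos ht] using this

lemma F_lower {f : ℝ → ℝ} (hf : Continuous f) (h : F1Cond f) {M : ℝ} (hM : 0 < M) :
    M ^ 2 / 4 * (f (M/2) / (M/2)) ≤ Fprim f M := by
  have hsplit : Fprim f M = (∫ t in (0:ℝ)..(M/2), f t) + ∫ t in (M/2)..M, f t := by
    unfold Fprim
    rw [intervalIntegral.integral_add_adjacent_intervals] <;> exact hf.intervalIntegrable _ _
  have h1 : (∫ t in (0:ℝ)..(M/2), (0:ℝ)) ≤ ∫ t in (0:ℝ)..(M/2), f t :=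
    intervalIntegral.integral_mono_on_of_le_Ioo (by linarith) (by simp)
      (hf.intervalIntegrable _ _) (fun t ht => (f_pos h ht.1).le)
  have h2 : (∫ t in (M/2)..M, f (M/2)) ≤ ∫ t in (M/2)..M, f t := by
    refine intervalIntegral.integral_mono_on_of_le_Ioo (by linarith) (by simp)
      (hf.intervalIntegrable _ _) (fun t ht => ?_)
    have h3 : 0 < M/2 := by linarith
    have ht0 : 0 < t := h3.trans ht.1
    have h4 := q_mono h h3 ht.1.le
    have h5 := f_pos h h3
    rw [div_le_div_iff₀ h3 ht0] at h4
    have h6 : f (M/2) * (M/2) ≤ f (M/2) * t := mul_le_mul_of_nonneg_left ht.1.le h5.le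
    exact le_of_mul_le_mul_right (h6.trans h4) h3
  simp only [intervalIntegral.integral_zero, intervalIntegral.integral_const, smul_eq_mul] at h1 h2
  have h7 : M ^ 2 / 4 * (f (M/2) / (M/2)) = (M - M/2) * f (M/2) := by field_simp; ring
  rw [h7, hsplit]; linarith

lemma F_pos {f : ℝ → ℝ} (hf : Continuous f) (h : F1Cond f) {M : ℝ} (hM : 0 < M) :
    0 < Fprim f M := by
  have := F_lower hf h hM
  have h3 : 0 < M/2 := by linarith
  have := f_pos h h3
  have : 0 < M ^ 2 / 4 * (f (M/2) / (M/2)) := by positivity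
  linarith

lemma F_scale {f : ℝ → ℝ} (hf : Continuous f) (h : F1Cond f) {M r : ℝ} (hM : 0 < M)
    (hr : 0 < r) (hr1 : r ≤ 1) : Fprim f (r * M) ≤ r ^ 2 * Fprim f M := by
  have h1 : Fprim f (r * M) = r * ∫ t in (0:ℝ)..M, f (r * t) := by
    rw [intervalIntegral.integral_comp_mul_left f hr.ne']
    simp [Fprim, hr.ne']
  have h2 : (∫ t in (0:ℝ)..M, f (r * t)) ≤ ∫ t in (0:ℝ)..M, r * f t := by
    refine intervalIntegral.integral_mono_on_of_le_Ioo hM.le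
      (Continuous.intervalIntegrable (by fun_prop) _ _)
      (Continuous.intervalIntegrable (by fun_prop) _ _) (fun t ht => ?_)
    have ht0 : 0 < t := ht.1
    have hrt : 0 < r * t := mul_pos hr ht0
    have h4 := q_mono h hrt (by nlinarith : r * t ≤ t)
    rw [div_le_iff₀ hrt] at h4
    refine h4.trans (le_of_eq ?_)
    field_simp
  rw [intervalIntegral.integral_const_mul] at h2
  rw [h1]
  calc _ ≤ r * (r * Fprim f M) := mul_le_mul_of_nonneg_left h2 hr.le
    _ = _ := by ring

lemma V_gap {f : ℝ → ℝ} (hf : Continuous f) (h : F1Cond f) {M l s : ℝ} (hM : 0 < M)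
    (hl : 0 ≤ l) (hs : 0 < s) (hsM : s ≤ M) :
    Fprim f M * (1 - (s / M) ^ 2) ≤ Vpot f l M - Vpot f l s := by
  have h1 := F_scale hf h hM (div_pos hs hM) ((div_le_one hM).2 hsM)
  rw [div_mul_cancel₀ _ hM.ne'] at h1
  have h2 : s ^ 2 ≤ M ^ 2 := by gcongr
  have h3 : l / 2 * s ^ 2 ≤ l / 2 * M ^ 2 := by gcongr
  unfold Vpot
  linarith

lemma model_deriv {M A : ℝ} (hM : 0 < M) {s : ℝ} (hs : s ∈ Ioo 0 M) :
    HasDerivAt (fun s => M / A * Real.arcsin (s / M)) (A⁻¹ * (1 / √(1 - (s / M) ^ 2))) s := by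
  have h0 : 0 < s / M := div_pos hs.1 hM
  have h1 : s / M < 1 := (div_lt_one hM).2 hs.2
  have := ((Real.hasDerivAt_arcsin (by linarith) h1.ne).comp s
    ((hasDerivAt_id s).div_const M)).const_mul (M / A)
  refine this.congr_deriv ?_
  field_simp

lemma model_int {M A : ℝ} (hM : 0 < M) (hA : 0 < A) :
    IntervalIntegrable (fun s => A⁻¹ * (1 / √(1 - (s / M) ^ 2))) volume 0 M ∧
    ∫ s in (0:ℝ)..M, A⁻¹ * (1 / √(1 - (s / M) ^ 2)) = Real.pi / 2 * M / A := by
  have hc : Continuous (fun s => M / A * Real.arcsin (s / M)) := by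
    have := Real.continuous_arcsin
    fun_prop
  have hi : IntervalIntegrable (fun s => A⁻¹ * (1 / √(1 - (s / M) ^ 2))) volume 0 M := by
    rw [intervalIntegrable_iff_integrableOn_Ioc_of_le hM.le]
    exact intervalIntegral.integrableOn_deriv_of_nonneg hc.continuousOn
      (fun s hs => model_deriv hM hs) (fun s hs => by positivity)
  refine ⟨hi, ?_⟩
  rw [intervalIntegral.integral_eq_sub_of_hasDerivAt_of_le hM.le hc.continuousOn
    (fun s hs => model_deriv hM hs) hi]
  simp [hM.ne']
  ring

lemma Fprim_cont {f : ℝ → ℝ} (hf : Continuous f) : Continuous (Fprim f) :=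
  intervalIntegral.continuous_primitive (fun _ _ => hf.intervalIntegrable _ _) 0

lemma V_bound {f : ℝ → ℝ} (hf : Continuous f) (h : F1Cond f) {M l s : ℝ} (hM : 0 < M)
    (hl : 0 ≤ l) (hs : s ∈ Ioc 0 M) :
    0 ≤ (Vpot f l M - Vpot f l s) ^ (-(1 / 2) : ℝ) ∧
    (Vpot f l M - Vpot f l s) ^ (-(1 / 2) : ℝ) ≤
      (√(Fprim f M))⁻¹ * (1 / √(1 - (s / M) ^ 2)) := by
  have hF := F_pos hf h hM
  rcases eq_or_lt_of_le hs.2 with rfl | hlt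
  · rw [sub_self, Real.zero_rpow (by norm_num)]
    exact ⟨le_rfl, by positivity⟩
  have h0 : 0 < s / M := div_pos hs.1 hM
  have h1 : s / M < 1 := (div_lt_one hM).2 hlt
  have h2 : 0 < 1 - (s / M) ^ 2 := by nlinarith
  have h3 := V_gap hf h hM hl hs.1 hs.2
  have h4 : 0 < Fprim f M * (1 - (s / M) ^ 2) := mul_pos hF h2
  refine ⟨Real.rpow_nonneg (h4.le.trans h3) _, ?_⟩
  refine (Real.rpow_le_rpow_of_nonpos h4 h3 (by norm_num)).trans (le_of_eq ?_)
  rw [Real.rpow_neg h4.le, ← Real.sqrt_eq_rpow, Real.sqrt_mul hF.le, mul_inv, one_div]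

lemma main_bound {f : ℝ → ℝ} (hf : Continuous f) (h : F1Cond f) {M l : ℝ} (hM : 0 < M)
    (hl : 0 ≤ l) :
    IntervalIntegrable (fun s => (Vpot f l M - Vpot f l s) ^ (-(1 / 2) : ℝ)) volume 0 M ∧
      (∫ s in (0 : ℝ)..M, (Vpot f l M - Vpot f l s) ^ (-(1 / 2) : ℝ)) ≤
        Real.pi / 2 * M / Real.sqrt (Fprim f M) := by
  have hA : 0 < √(Fprim f M) := Real.sqrt_pos.2 (F_pos hf h hM)
  obtain ⟨hi, he⟩ := model_int hM hA
  have hV : Continuous (Vpot f l) := by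
    have := Fprim_cont hf
    unfold Vpot
    fun_prop
  have hmeas : Measurable (fun s => (Vpot f l M - Vpot f l s) ^ (-(1 / 2) : ℝ)) := by
    have := hV.measurable
    fun_prop
  have hI : IntervalIntegrable
      (fun s => (Vpot f l M - Vpot f l s) ^ (-(1 / 2) : ℝ)) volume 0 M := by
    rw [intervalIntegrable_iff_integrableOn_Ioc_of_le hM.le] at hi ⊢
    refine Integrable.mono' hi hmeas.aestronglyMeasurable ?_
    filter_upwards [ae_restrict_mem measurableSet_Ioc] with s hs
    obtain ⟨h1, h2⟩ := V_bound hf h hM hl hs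
    rwa [Real.norm_of_nonneg h1]
  refine ⟨hI, ?_⟩
  rw [← he]
  exact intervalIntegral.integral_mono_on_of_le_Ioo hM.le hI hi
    (fun s hs => (V_bound hf h hM hl ⟨hs.1, hs.2.le⟩).2)

/-- Under (f1), for every `λ ≥ 0` and `M > 0` the improper integral
`∫₀^M (V_λ(M) − V_λ(u))^{−1/2} du` is finite, bounded by `(π/2) M / √(F(M))`, and the
supremum over `λ ≥ 0` tends to `0` as `M → +∞`. -/
theorem time_in_potential_well_estimate (f : ℝ → ℝ) (hf : Continuous f)
    (hf1 : F1Cond f) :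
    (∀ lambda : ℝ, 0 ≤ lambda → ∀ M : ℝ, 0 < M →
      IntervalIntegrable
        (fun s => (Vpot f lambda M - Vpot f lambda s) ^ (-(1 / 2) : ℝ)) volume 0 M ∧
      (∫ s in (0 : ℝ)..M, (Vpot f lambda M - Vpot f lambda s) ^ (-(1 / 2) : ℝ)) ≤
        Real.pi / 2 * M / Real.sqrt (Fprim f M)) ∧
    Tendsto
      (fun M : ℝ => sSup ((fun lambda : ℝ =>
        ∫ s in (0 : ℝ)..M, (Vpot f lambda M - Vpot f lambda s) ^ (-(1 / 2) : ℝ)) '' Ici 0))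
      atTop (𝓝 0) := by
  refine ⟨fun l hl M hM => main_bound hf hf1 hM hl, ?_⟩
  have hlim : Tendsto (fun M : ℝ => Real.pi / √(f (M/2) / |M/2|)) atTop (𝓝 0) := by
    refine Tendsto.div_atTop tendsto_const_nhds (Real.tendsto_sqrt_atTop.comp ?_)
    exact hf1.2.2.1.comp (tendsto_id.atTop_div_const (by norm_num : (0:ℝ) < 2))
  refine tendsto_of_tendsto_of_tendsto_of_le_of_le' tendsto_const_nhds hlim ?_ ?_
  · filter_upwards [eventually_gt_atTop 0] with M hM
    refine Real.sSup_nonneg ?_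
    rintro _ ⟨l, hl, rfl⟩
    dsimp only
    rw [intervalIntegral.integral_of_le hM.le]
    exact setIntegral_nonneg measurableSet_Ioc (fun s hs => (V_bound hf hf1 hM hl hs).1)
  · filter_upwards [eventually_gt_atTop 0] with M hM
    have h3 : 0 < M/2 := by linarith
    refine Real.sSup_le ?_ (by positivity)
    rintro _ ⟨l, hl, rfl⟩
    refine (main_bound hf hf1 hM hl).2.trans ?_
    have hq : 0 < f (M/2) / (M/2) := div_pos (f_pos hf1 h3) h3
    have hlow := F_lower hf hf1 hM
    rw [abs_of_pos h3]
    have h5 : M / 2 * √(f (M/2) / (M/2)) ≤ √(Fprim f M) := by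
      refine Real.le_sqrt_of_sq_le ?_
      rw [mul_pow, Real.sq_sqrt hq.le]
      linarith
    have h6 : 0 < √(f (M/2) / (M/2)) := Real.sqrt_pos.2 hq
    calc Real.pi / 2 * M / √(Fprim f M)
        ≤ Real.pi / 2 * M / (M / 2 * √(f (M/2) / (M/2))) := by
          have := Real.pi_pos
          gcongr
      _ = _ := by field_simp
end

section
/- Let (Ω, μ) be a measure space, let f : ℝ → ℝ satisfy f(t) > 0 for all t > 0 and f(0) = 0, and let λ_i ≤ λ be real numbers. Then there exist no measurable functions u, ξ : Ω → ℝ such that: ξ > 0 almost everywhere; u ≥ 0 almost everywhere and u is not almost everywhere equal to 0; the functions u·ξ and f(u)·ξ are μ-integrable; and ∫_Ω (λ u + f(u)) ξ dμ = λ_i ∫_Ω u ξ dμ. (This is the weak formulation showing that the equation A u = λ u + f(u) has no nontrivial nonnegative solution for λ ≥ λ_i when A admits an almost everywhere positive eigenfunction ξ with eigenvalue λ_i.) -/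
open Filter Topology Set MeasureTheory

/-- If `f(t) > 0` for `t > 0`, `f(0) = 0` and `λ ≥ λᵢ`, then there is no
measurable pair `(u, ξ)` with `ξ > 0` a.e., `u ≥ 0` a.e. and `u` not a.e. zero, such that
`u ξ` and `f(u) ξ` are integrable and `∫ (λ u + f(u)) ξ dμ = λᵢ ∫ u ξ dμ`
(no nontrivial nonnegative solution of `Au = λu + f(u)` tested against an a.e. positive
eigenfunction `ξ` of eigenvalue `λᵢ`). -/
theorem no_nonneg_solution_above_positive_eigenfunction
    {Ω : Type*} [MeasurableSpace Ω] (μ : Measure Ω)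
    (f : ℝ → ℝ) (hfpos : ∀ t : ℝ, 0 < t → 0 < f t) (hf0 : f 0 = 0)
    (lami lambda : ℝ) (hle : lami ≤ lambda) :
    ¬ ∃ (u ξ : Ω → ℝ), Measurable u ∧ Measurable ξ ∧
      (∀ᵐ x ∂μ, 0 < ξ x) ∧ (∀ᵐ x ∂μ, 0 ≤ u x) ∧
      ¬ (u =ᵐ[μ] (fun _ => 0)) ∧
      Integrable (fun x => u x * ξ x) μ ∧
      Integrable (fun x => f (u x) * ξ x) μ ∧
      (∫ x, (lambda * u x + f (u x)) * ξ x ∂μ) = lami * ∫ x, u x * ξ x ∂μ := by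
  rintro ⟨u, ξ, -, -, hξ, hu, hne, h1, h2, heq⟩
  have hsplit : (∫ x, (lambda * u x + f (u x)) * ξ x ∂μ)
      = lambda * (∫ x, u x * ξ x ∂μ) + ∫ x, f (u x) * ξ x ∂μ := by
    rw [← integral_const_mul, ← integral_add (h1.const_mul lambda) h2]
    congr 1
    funext x
    ring
  have hnn : 0 ≤ᵐ[μ] fun x => f (u x) * ξ x := by
    filter_upwards [hξ, hu] with x hx hux
    rcases hux.eq_or_lt with h | h
    · simp [← h, hf0]
    · exact (mul_pos (hfpos _ h) hx).le
  have hI : 0 ≤ ∫ x, u x * ξ x ∂μ := by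
    apply integral_nonneg_of_ae
    filter_upwards [hξ, hu] with x hx hux
    exact mul_nonneg hux hx.le
  have hJ : 0 ≤ ∫ x, f (u x) * ξ x ∂μ := integral_nonneg_of_ae hnn
  have hzero : ∫ x, f (u x) * ξ x ∂μ = 0 := by
    have := mul_le_mul_of_nonneg_right hle hI
    linarith
  rw [integral_eq_zero_iff_of_nonneg_ae hnn h2] at hzero
  apply hne
  filter_upwards [hξ, hu, hzero] with x hx hux hz
  rcases hux.eq_or_lt with h | h
  · exact h.symm
  · exact absurd hz (mul_pos (hfpos _ h) hx).ne'
end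

section
/- For every ε ∈ (0, 1/2) and every integer ℓ ≥ 1, the series ∑_{j = ℓ²+1}^{∞} j^ε / (j² − (ℓ²−1)²) converges and satisfies ∑_{j = ℓ²+1}^{∞} j^ε / (j² − (ℓ²−1)²) ≤ (3/ε) · (2ℓ² + 1)^{(3ε/2) − 1}. -/
open Filter Topology Set

lemma aux_step (s : ℝ) (hs : 0 < s) (t : ℝ) (ht : 1 < t) :
    s * t ^ (-1 - s) + t ^ (-s) ≤ (t - 1) ^ (-s) := by
  have ht0 : 0 < t := by linarith
  have hu : 0 < 1 - 1 / t := by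
    have : 1 / t < 1 := by rw [div_lt_one ht0]; exact ht
    linarith
  have h1 : 1 + s / t ≤ (1 - 1 / t) ^ (-s) := by
    rw [Real.rpow_def_of_pos hu]
    have h2 := Real.log_le_sub_one_of_pos hu
    have h3 := Real.add_one_le_exp (Real.log (1 - 1 / t) * (-s))
    have h4 : s / t = s * (1 / t) := by ring
    rw [h4]
    nlinarith
  have h5 : t - 1 = t * (1 - 1 / t) := by field_simp
  have h6 : t ^ (-1 - s) = t ^ (-s) / t := by
    rw [← Real.rpow_sub_one ht0.ne']
    congr 1; ring
  rw [h5, Real.mul_rpow ht0.le hu.le, h6]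
  have h7 : 0 < t ^ (-s) := Real.rpow_pos_of_pos ht0 _
  calc s * (t ^ (-s) / t) + t ^ (-s) = t ^ (-s) * (1 + s / t) := by ring
    _ ≤ _ := by gcongr

lemma aux_sum (s : ℝ) (hs : 0 < s) (n : ℕ) :
    s * ∑ i ∈ Finset.range n, ((i : ℝ) + 2) ^ (-1 - s) + ((n : ℝ) + 1) ^ (-s) ≤ 1 := by
  induction n with
  | zero => simp
  | succ k ih =>
    rw [Finset.sum_range_succ]
    have hk : (0 : ℝ) ≤ k := Nat.cast_nonneg k
    have h := aux_step s hs ((k : ℝ) + 2) (by linarith)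
    have e1 : (k : ℝ) + 2 - 1 = k + 1 := by ring
    have e2 : ((k + 1 : ℕ) : ℝ) + 1 = k + 2 := by push_cast; ring
    rw [e1] at h
    rw [e2]
    linarith

lemma aux_term (ε : ℝ) (h0 : 0 < ε) (h1 : ε < 1 / 2) (M t : ℝ) (hM : 0 ≤ M) (ht : 2 ≤ t) :
    (t + M) ^ ε / (t * (t + 2 * M)) ≤
      3 / 2 * (2 * M + 3) ^ (3 * ε / 2 - 1) * t ^ (-1 - ε / 2) := by
  have ht0 : 0 < t := by linarith
  have hB : 0 < t + 2 * M := by linarith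
  have hA : 0 < 2 * M + 3 := by linarith
  have a1 : (t + M) ^ ε ≤ (t + 2 * M) ^ ε :=
    Real.rpow_le_rpow (by linarith) (by linarith) h0.le
  have a2 : (t + 2 * M) ^ ε / (t * (t + 2 * M)) =
      (t + 2 * M) ^ (3 * ε / 2 - 1) * ((t + 2 * M) ^ (-(ε / 2)) / t) := by
    have : (t + 2 * M) ^ (3 * ε / 2 - 1) * (t + 2 * M) ^ (-(ε / 2))
        = (t + 2 * M) ^ ε / (t + 2 * M) := by
      rw [← Real.rpow_add hB, ← Real.rpow_sub_one hB.ne']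
      congr 1; ring
    rw [← mul_div_assoc, this, div_div, mul_comm t]
  have a3 : (t + 2 * M) ^ (-(ε / 2)) ≤ t ^ (-(ε / 2)) :=
    Real.rpow_le_rpow_of_nonpos ht0 (by linarith) (by linarith)
  have a4 : (t + 2 * M) ^ (3 * ε / 2 - 1) ≤ (2 / 3 * (2 * M + 3)) ^ (3 * ε / 2 - 1) :=
    Real.rpow_le_rpow_of_nonpos (by linarith) (by linarith) (by linarith)
  have a5 : (2 / 3 : ℝ) ^ (3 * ε / 2 - 1) ≤ 3 / 2 := by
    calc (2 / 3 : ℝ) ^ (3 * ε / 2 - 1) ≤ (2 / 3 : ℝ) ^ (-1 : ℝ) :=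
          Real.rpow_le_rpow_of_exponent_ge (by norm_num) (by norm_num) (by linarith)
      _ = 3 / 2 := by rw [Real.rpow_neg_one]; norm_num
  rw [Real.mul_rpow (by norm_num) hA.le] at a4
  have a6 : t ^ (-1 - ε / 2) = t ^ (-(ε / 2)) / t := by
    rw [← Real.rpow_sub_one ht0.ne']
    congr 1; ring
  have a7 : (t + 2 * M) ^ (3 * ε / 2 - 1) ≤ 3 / 2 * (2 * M + 3) ^ (3 * ε / 2 - 1) :=
    a4.trans (by gcongr)
  calc _ ≤ (t + 2 * M) ^ ε / (t * (t + 2 * M)) := by gcongr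
    _ = _ := a2
    _ ≤ _ := by rw [a6]; gcongr

/-- For `ε ∈ (0, 1/2)` and `ℓ ≥ 1`, the series
`∑_{j = ℓ²+1}^∞ j^ε / (j² − (ℓ²−1)²)` converges and is at most
`(3/ε) (2ℓ² + 1)^{3ε/2 − 1}`. -/
theorem tail_spectral_sum_estimate :
    ∀ ε : ℝ, ε ∈ Ioo (0 : ℝ) (1 / 2) → ∀ ℓ : ℕ, 1 ≤ ℓ →
      Summable (fun j : ℕ =>
        ((j + ℓ ^ 2 + 1 : ℕ) : ℝ) ^ ε /
          (((j + ℓ ^ 2 + 1 : ℕ) : ℝ) ^ 2 - ((ℓ : ℝ) ^ 2 - 1) ^ 2)) ∧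
      (∑' j : ℕ,
        ((j + ℓ ^ 2 + 1 : ℕ) : ℝ) ^ ε /
          (((j + ℓ ^ 2 + 1 : ℕ) : ℝ) ^ 2 - ((ℓ : ℝ) ^ 2 - 1) ^ 2)) ≤
        3 / ε * (2 * (ℓ : ℝ) ^ 2 + 1) ^ (3 * ε / 2 - 1) := by
  intro ε hε ℓ hℓ
  obtain ⟨h0, h1⟩ := hε
  have hl : (1 : ℝ) ≤ (ℓ : ℝ) := by exact_mod_cast hℓ
  have hM : (0 : ℝ) ≤ (ℓ : ℝ) ^ 2 - 1 := by nlinarith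
  have eA : 2 * ((ℓ : ℝ) ^ 2 - 1) + 3 = 2 * (ℓ : ℝ) ^ 2 + 1 := by ring
  set f : ℕ → ℝ := fun j : ℕ =>
        ((j + ℓ ^ 2 + 1 : ℕ) : ℝ) ^ ε /
          (((j + ℓ ^ 2 + 1 : ℕ) : ℝ) ^ 2 - ((ℓ : ℝ) ^ 2 - 1) ^ 2) with hf
  have key : ∀ j : ℕ, f j = (((j : ℝ) + 2) + ((ℓ : ℝ) ^ 2 - 1)) ^ ε /
      (((j : ℝ) + 2) * (((j : ℝ) + 2) + 2 * ((ℓ : ℝ) ^ 2 - 1))) := by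
    intro j
    simp only [hf]
    push_cast
    congr 1
    · congr 1; ring
    · ring
  have hnn : ∀ j, 0 ≤ f j := by
    intro j
    rw [key]
    have hj : (0 : ℝ) ≤ j := Nat.cast_nonneg j
    positivity
  have hb : ∀ n, ∑ i ∈ Finset.range n, f i ≤
      3 / ε * (2 * (ℓ : ℝ) ^ 2 + 1) ^ (3 * ε / 2 - 1) := by
    intro n
    set C := (2 * (ℓ : ℝ) ^ 2 + 1) ^ (3 * ε / 2 - 1) with hC
    have hC0 : 0 ≤ C := by positivity
    have hs := aux_sum (ε / 2) (by linarith) n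
    have hp : 0 ≤ ((n : ℝ) + 1) ^ (-(ε / 2)) := by positivity
    have hs2 : ∑ i ∈ Finset.range n, ((i : ℝ) + 2) ^ (-1 - ε / 2) ≤ 2 / ε := by
      rw [le_div_iff₀ h0]; linarith
    calc ∑ i ∈ Finset.range n, f i
        ≤ ∑ i ∈ Finset.range n, 3 / 2 * C * ((i : ℝ) + 2) ^ (-1 - ε / 2) := by
          apply Finset.sum_le_sum
          intro i _
          have hi : (0 : ℝ) ≤ i := Nat.cast_nonneg i
          have := aux_term ε h0 h1 _ ((i : ℝ) + 2) hM (by linarith)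
          rw [eA] at this
          rw [key]
          exact this
      _ = 3 / 2 * C * ∑ i ∈ Finset.range n, ((i : ℝ) + 2) ^ (-1 - ε / 2) := by
          rw [Finset.mul_sum]
      _ ≤ 3 / 2 * C * (2 / ε) := by gcongr
      _ = 3 / ε * C := by ring
  exact ⟨summable_of_sum_range_le hnn hb, Real.tsum_le_of_sum_range_le hnn hb⟩
end
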